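/- arXiv:1909.09245 — 2 statements merged into one kernel-verified Lean document; each statement's English description precedes it below -/
import Mathlib

section
/- For every integer d ≥ 1 and every m ∈ {-1, -2, -3}, the element (σ1σ2)^{3d} σ1^m σ2^{-1} of the braid group B_3 is quasipositive; that is, it can be written as a finite product of conjugates of the generators σ1 and σ2. -/
/-- The single braid relator σ₁σ₂σ₁(σ₂σ₁σ₂)⁻¹ in the free group on two generators. -/
def braidRels : Set (FreeGroup (Fin 2)) :=
  {FreeGroup.of 0 * FreeGroup.of 1 * FreeGroup.of 0 *
    (FreeGroup.of 1 * FreeGroup.of 0 * FreeGroup.of 1)⁻¹}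

/-- The braid group B₃ = ⟨σ₁, σ₂ ∣ σ₁σ₂σ₁ = σ₂σ₁σ₂⟩. -/
abbrev B3 : Type := PresentedGroup braidRels

/-- The generator σ₁ of B₃. -/
def σ₁ : B3 := PresentedGroup.of 0

/-- The generator σ₂ of B₃. -/
def σ₂ : B3 := PresentedGroup.of 1

/-- A 3-braid is quasipositive if it is a finite product of conjugates of the
generators σ₁ and σ₂. -/
def Quasipositive (β : B3) : Prop :=
  ∃ (k : ℕ) (w g : Fin k → B3),
    (∀ i, g i = σ₁ ∨ g i = σ₂) ∧
    β = (List.ofFn fun i => w i * g i * (w i)⁻¹).prod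

theorem B3_braid : σ₁ * σ₂ * σ₁ = σ₂ * σ₁ * σ₂ := by
  have h : PresentedGroup.mk braidRels (FreeGroup.of 0 * FreeGroup.of 1 * FreeGroup.of 0 *
      (FreeGroup.of 1 * FreeGroup.of 0 * FreeGroup.of 1)⁻¹) = 1 :=
    PresentedGroup.one_of_mem (Set.mem_singleton _)
  rw [map_mul, map_inv, mul_inv_eq_one] at h
  exact h

theorem braid_key {G : Type*} [Group G] (a b : G) (h : a * b * a = b * a * b) :
    (a * b) ^ 3 * (a ^ 3)⁻¹ * b⁻¹ = (a⁻¹ * b * a⁻¹⁻¹) * a := by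
  have e1 : a * (a * b * a) = a * b * a * b := by
    calc a * (a * b * a) = a * (b * a * b) := by rw [h]
      _ = _ := by group
  have e2 : b * (a * b * a) = a * b * a * a := by
    calc b * (a * b * a) = (b * a * b) * a := by group
      _ = _ := by rw [← h]
  have e3 : (a * b) ^ 3 = (a * b * a) * (a * b * a) := by
    calc (a * b) ^ 3 = (a * b * a) * (b * a * b) := by simp only [pow_succ, pow_zero, one_mul, mul_assoc]
      _ = _ := by rw [h]
  have e4 : a * (a * b) ^ 3 = b * a * a * b * a ^ 3 := by
    calc a * (a * b) ^ 3 = a * (a * b * a) * (a * b * a) := by rw [e3]; group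
      _ = a * b * a * (b * (a * b * a)) := by rw [e1]; group
      _ = (a * b * a) * (a * b * a) * a := by rw [e2]; group
      _ = (b * a * b) * (a * b * a) * a := by rw [h]
      _ = b * a * (b * (a * b * a)) * a := by group
      _ = b * a * (a * b * a * a) * a := by rw [e2]
      _ = _ := by simp only [pow_succ, pow_zero, one_mul, mul_assoc]
  have e5 : (a * b) ^ 3 = a⁻¹ * (b * a * a * b * a ^ 3) := by rw [← e4]; group
  rw [e5]; group

theorem qp_one : Quasipositive 1 := ⟨0, Fin.elim0, Fin.elim0, fun i => i.elim0, by simp⟩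

theorem qp_conj (w g : B3) (hg : g = σ₁ ∨ g = σ₂) : Quasipositive (w * g * w⁻¹) :=
  ⟨1, fun _ => w, fun _ => g, fun _ => hg, by simp⟩

theorem qp_mul {x y : B3} (hx : Quasipositive x) (hy : Quasipositive y) :
    Quasipositive (x * y) := by
  obtain ⟨k, w, g, hg, rfl⟩ := hx
  obtain ⟨l, v, f, hf, rfl⟩ := hy
  refine ⟨k + l, Fin.append w v, Fin.append g f, ?_, ?_⟩
  · intro i
    refine Fin.addCases (fun i => ?_) (fun i => ?_) i
    · simpa using hg i
    · simpa using hf i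
  · simp [List.ofFn_add]

theorem qp_pow {x : B3} (hx : Quasipositive x) (n : ℕ) : Quasipositive (x ^ n) := by
  induction n with
  | zero => simpa using qp_one
  | succ n ih => rw [pow_succ]; exact qp_mul ih hx

theorem quasipositive_family_three (d : ℤ) (hd : 1 ≤ d) (m : ℤ)
    (hm : m ∈ ({-1, -2, -3} : Set ℤ)) :
    Quasipositive ((σ₁ * σ₂) ^ (3 * d) * σ₁ ^ m * σ₂⁻¹) := by
  have ha : Quasipositive σ₁ := by simpa using qp_conj 1 σ₁ (Or.inl rfl)
  have hb : Quasipositive σ₂ := by simpa using qp_conj 1 σ₂ (Or.inr rfl)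
  have hc : Quasipositive (σ₂ * σ₁ * σ₂⁻¹) := qp_conj σ₂ σ₁ (Or.inl rfl)
  have h3 : Quasipositive ((σ₁ * σ₂) ^ (3 * d) * σ₁ ^ (-3 : ℤ) * σ₂⁻¹) := by
    obtain ⟨n, hn⟩ := Int.eq_ofNat_of_zero_le (sub_nonneg.2 hd)
    have hd' : 3 * d = ((3 * n : ℕ) : ℤ) + 3 := by push_cast; lia
    have e : (σ₁ * σ₂) ^ (3 * d) * σ₁ ^ (-3 : ℤ) * σ₂⁻¹ =
        (σ₁ * σ₂) ^ (3 * n) * ((σ₁⁻¹ * σ₂ * σ₁⁻¹⁻¹) * σ₁) := by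
      rw [← braid_key σ₁ σ₂ B3_braid, hd', zpow_add, zpow_natCast, zpow_neg]
      simp only [mul_assoc]
      rfl
    rw [e]
    exact qp_mul (qp_pow (qp_mul ha hb) _) (qp_mul (qp_conj _ _ (Or.inr rfl)) ha)
  have h2 : Quasipositive ((σ₁ * σ₂) ^ (3 * d) * σ₁ ^ (-2 : ℤ) * σ₂⁻¹) := by
    have := qp_mul h3 hc
    have e : (σ₁ ^ (-2 : ℤ) : B3) = σ₁ ^ (-3 : ℤ) * σ₁ := by group
    rw [e]
    simpa [mul_assoc] using this
  have h1 : Quasipositive ((σ₁ * σ₂) ^ (3 * d) * σ₁ ^ (-1 : ℤ) * σ₂⁻¹) := by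
    have := qp_mul h2 hc
    have e : (σ₁ ^ (-1 : ℤ) : B3) = σ₁ ^ (-2 : ℤ) * σ₁ := by group
    rw [e]
    simpa only [mul_assoc, inv_mul_cancel_left] using this
  rcases hm with rfl | rfl | rfl
  · exact h1
  · exact h2
  · exact h3
end

section
/- Fix an integer w. Let S = { t ↦ w + 2 − 2t, t ↦ w − 4 + 4t, t ↦ w − 2 + 2t, t ↦ w − 2, t ↦ w − 2 − 2t, t ↦ w + 2t, t ↦ w, t ↦ w − 2t }. Then there are exactly ten continuous functions f : [0,1] → ℝ that are piecewise along S, satisfy f(1) = w, and satisfy w + 4(t − 1) ≤ f(t) ≤ w − 2(t − 1) for all t ∈ [0,1]: the four affine functions w + 2 − 2t, w − 4 + 4t, w − 2 + 2t, and the constant w; and six functions with non-constant slope, namely (w − 2 − 2t on [0,1/3], then w − 4 + 4t), (w − 2 on [0,1/2], then w − 4 + 4t), (w − 2t on [0,2/3], then w − 4 + 4t), (w − 2t on [0,1/2], then w − 2 + 2t), (w + 2t on [0,1/2], then w + 2 − 2t), and (w − 2 + 2t on [0,1/2], then w − 2t on [1/2,2/3], then w − 4 + 4t). (This is the enumeration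 of the ten possible paths for the annular Rasmussen invariant d_t of a 4-braid closure with writhe w, before the subcomplex restriction is applied.) -/
/-- A function `f` on `[0,1]` is *piecewise along* a set `S` of functions `ℝ → ℝ`
if there are finitely many points `0 = t₀ < t₁ < ⋯ < t_k = 1` such that on each
subinterval `[t_{i-1}, t_i]` the function `f` coincides with some element of `S`. -/
def PiecewiseAlong (S : Set (ℝ → ℝ)) (f : Set.Icc (0 : ℝ) 1 → ℝ) : Prop :=
  ∃ (k : ℕ) (t : ℕ → ℝ), t 0 = 0 ∧ t k = 1 ∧ (∀ i, i < k → t i < t (i + 1)) ∧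
    ∀ i, i < k → ∃ g ∈ S, ∀ x : Set.Icc (0 : ℝ) 1,
      t i ≤ (x : ℝ) → (x : ℝ) ≤ t (i + 1) → f x = g (x : ℝ)

/-- The affine function `t ↦ w + 2 - 2t`. -/
noncomputable def path₁ (w : ℤ) : C(Set.Icc (0 : ℝ) 1, ℝ) :=
  ⟨fun x => (w : ℝ) + 2 - 2 * (x : ℝ), by fun_prop⟩

/-- The affine function `t ↦ w - 4 + 4t`. -/
noncomputable def path₂ (w : ℤ) : C(Set.Icc (0 : ℝ) 1, ℝ) :=
  ⟨fun x => (w : ℝ) - 4 + 4 * (x : ℝ), by fun_prop⟩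

/-- The affine function `t ↦ w - 2 + 2t`. -/
noncomputable def path₃ (w : ℤ) : C(Set.Icc (0 : ℝ) 1, ℝ) :=
  ⟨fun x => (w : ℝ) - 2 + 2 * (x : ℝ), by fun_prop⟩

/-- The constant function `t ↦ w`. -/
noncomputable def path₄ (w : ℤ) : C(Set.Icc (0 : ℝ) 1, ℝ) :=
  ⟨fun _ => (w : ℝ), continuous_const⟩

/-- The function equal to `w - 2 - 2t` on `[0,1/3]` and to `w - 4 + 4t` on `[1/3,1]`. -/
noncomputable def path₅ (w : ℤ) : C(Set.Icc (0 : ℝ) 1, ℝ) :=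
  ⟨fun x => max ((w : ℝ) - 2 - 2 * (x : ℝ)) ((w : ℝ) - 4 + 4 * (x : ℝ)), by fun_prop⟩

/-- The function equal to `w - 2` on `[0,1/2]` and to `w - 4 + 4t` on `[1/2,1]`. -/
noncomputable def path₆ (w : ℤ) : C(Set.Icc (0 : ℝ) 1, ℝ) :=
  ⟨fun x => max ((w : ℝ) - 2) ((w : ℝ) - 4 + 4 * (x : ℝ)), by fun_prop⟩

/-- The function equal to `w - 2t` on `[0,2/3]` and to `w - 4 + 4t` on `[2/3,1]`. -/
noncomputable def path₇ (w : ℤ) : C(Set.Icc (0 : ℝ) 1, ℝ) :=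
  ⟨fun x => max ((w : ℝ) - 2 * (x : ℝ)) ((w : ℝ) - 4 + 4 * (x : ℝ)), by fun_prop⟩

/-- The function equal to `w - 2t` on `[0,1/2]` and to `w - 2 + 2t` on `[1/2,1]`. -/
noncomputable def path₈ (w : ℤ) : C(Set.Icc (0 : ℝ) 1, ℝ) :=
  ⟨fun x => max ((w : ℝ) - 2 * (x : ℝ)) ((w : ℝ) - 2 + 2 * (x : ℝ)), by fun_prop⟩

/-- The function equal to `w + 2t` on `[0,1/2]` and to `w + 2 - 2t` on `[1/2,1]`. -/
noncomputable def path₉ (w : ℤ) : C(Set.Icc (0 : ℝ) 1, ℝ) :=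
  ⟨fun x => min ((w : ℝ) + 2 * (x : ℝ)) ((w : ℝ) + 2 - 2 * (x : ℝ)), by fun_prop⟩

/-- The function equal to `w - 2 + 2t` on `[0,1/2]`, to `w - 2t` on `[1/2,2/3]` and to
`w - 4 + 4t` on `[2/3,1]`. -/
noncomputable def path₁₀ (w : ℤ) : C(Set.Icc (0 : ℝ) 1, ℝ) :=
  ⟨fun x => max (min ((w : ℝ) - 2 + 2 * (x : ℝ)) ((w : ℝ) - 2 * (x : ℝ)))
      ((w : ℝ) - 4 + 4 * (x : ℝ)), by fun_prop⟩

/-- Intercepts (relative to `w`) of the eight lines. -/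
def lineC : Fin 8 → ℝ := ![2, -4, -2, -2, -2, 0, 0, 0]

/-- Slopes of the eight lines. -/
def lineM : Fin 8 → ℝ := ![-2, 4, 2, 0, -2, 2, 0, -2]

/-- On an interval where the lines do not cross, a continuous selection of the lines
is a single line. -/
lemma single_line (F : ℝ → ℝ) (hF : Continuous F) (w a b : ℝ) (hab : a < b)
    (hsel : ∀ x ∈ Set.Ioo a b, ∃ i, F x = w + lineC i + lineM i * x)
    (hdis : ∀ i j, ∀ x ∈ Set.Ioo a b, lineC i + lineM i * x = lineC j + lineM j * x → i = j) :
    ∃ i, ∀ x ∈ Set.Icc a b, F x = w + lineC i + lineM i * x := by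
  have hm : (a + b) / 2 ∈ Set.Ioo a b := ⟨by linarith, by linarith⟩
  obtain ⟨i, hi⟩ := hsel _ hm
  refine ⟨i, ?_⟩
  have hcl : ∀ j, IsClosed {x | F x = w + lineC j + lineM j * x} := fun j =>
    isClosed_eq hF (by fun_prop)
  have hcl2 : IsClosed (⋃ j : {j : Fin 8 // j ≠ i}, {x | F x = w + lineC j + lineM j * x}) :=
    isClosed_iUnion_of_finite fun j => hcl j
  have hopen : Set.Ioo a b ⊆ {x | F x = w + lineC i + lineM i * x} := by
    intro x hx
    by_contra hne
    obtain ⟨j, hj⟩ := hsel x hx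
    have hji : j ≠ i := by
      rintro rfl
      exact hne hj
    obtain ⟨y, hy, hy1, hy2⟩ := isPreconnected_closed_iff.mp isPreconnected_Ioo _ _ (hcl i) hcl2
      (by
        intro z hz
        obtain ⟨l, hl⟩ := hsel z hz
        by_cases h : l = i
        · left
          subst h
          exact hl
        · right
          exact Set.mem_iUnion.mpr ⟨⟨l, h⟩, hl⟩)
      ⟨_, hm, hi⟩ ⟨x, hx, Set.mem_iUnion.mpr ⟨⟨j, hji⟩, hj⟩⟩
    obtain ⟨⟨l, hl⟩, hl2⟩ := Set.mem_iUnion.mp hy2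
    simp only [Set.mem_ofPred_eq] at hy1 hl2
    exact hl (hdis l i y hy (by linarith))
  intro x hx
  have := closure_minimal hopen (hcl i)
  rw [closure_Ioo hab.ne] at this
  exact this hx

lemma noncross (i j : Fin 8) (x : ℝ) (h0 : 0 < x) (h1 : x < 1) (h3 : x ≠ 1 / 3) (h2 : x ≠ 1 / 2)
    (h23 : x ≠ 2 / 3) (h : lineC i + lineM i * x = lineC j + lineM j * x) : i = j := by
  by_contra hne
  fin_cases i <;> fin_cases j <;> simp [lineC, lineM] at h hne <;>
    first
    | linarith
    | exact h3 (by linarith)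
    | exact h2 (by linarith)
    | exact h23 (by linarith)

/-- Build `PiecewiseAlong` from the four standard subintervals. -/
lemma piecewise_of_four (S : Set (ℝ → ℝ)) (f : Set.Icc (0 : ℝ) 1 → ℝ) (g₁ g₂ g₃ g₄ : ℝ → ℝ)
    (m₁ : g₁ ∈ S) (m₂ : g₂ ∈ S) (m₃ : g₃ ∈ S) (m₄ : g₄ ∈ S)
    (h₁ : ∀ x : Set.Icc (0 : ℝ) 1, 0 ≤ (x : ℝ) → (x : ℝ) ≤ 1 / 3 → f x = g₁ x)
    (h₂ : ∀ x : Set.Icc (0 : ℝ) 1, 1 / 3 ≤ (x : ℝ) → (x : ℝ) ≤ 1 / 2 → f x = g₂ x)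
    (h₃ : ∀ x : Set.Icc (0 : ℝ) 1, 1 / 2 ≤ (x : ℝ) → (x : ℝ) ≤ 2 / 3 → f x = g₃ x)
    (h₄ : ∀ x : Set.Icc (0 : ℝ) 1, 2 / 3 ≤ (x : ℝ) → (x : ℝ) ≤ 1 → f x = g₄ x) :
    PiecewiseAlong S f := by
  refine ⟨4, fun n => if n = 0 then 0 else if n = 1 then 1 / 3 else if n = 2 then 1 / 2 else
    if n = 3 then 2 / 3 else 1, by simp, by simp, ?_, ?_⟩
  · intro i hi
    interval_cases i <;> norm_num
  · intro i hi
    interval_cases i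
    · exact ⟨g₁, m₁, by simpa using h₁⟩
    · exact ⟨g₂, m₂, by simpa using h₂⟩
    · exact ⟨g₃, m₃, by simpa using h₃⟩
    · exact ⟨g₄, m₄, by simpa using h₄⟩

lemma exists_piece (k : ℕ) (t : ℕ → ℝ) (h0 : t 0 = 0) (x : ℝ) (hx0 : 0 ≤ x) (hk : 0 < k)
    (hx1 : x ≤ t k) : ∃ i, i < k ∧ t i ≤ x ∧ x ≤ t (i + 1) := by
  induction k with
  | zero => omega
  | succ n ih =>
    by_cases h : t n ≤ x
    · exact ⟨n, by omega, h, hx1⟩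
    · rcases Nat.eq_zero_or_pos n with rfl | hn
      · exact absurd (h0 ▸ hx0) h
      · obtain ⟨i, hi, hbb⟩ := ih hn (le_of_not_ge h)
        exact ⟨i, by omega, hbb⟩

lemma forward (w : ℤ) (f : C(Set.Icc (0 : ℝ) 1, ℝ))
    (hsel : ∀ x : Set.Icc (0 : ℝ) 1, ∃ i, f x = w + lineC i + lineM i * x)
    (h1 : f ⟨1, Set.right_mem_Icc.mpr zero_le_one⟩ = (w : ℝ)) :
    f ∈ ({path₁ w, path₂ w, path₃ w, path₄ w, path₅ w,
          path₆ w, path₇ w, path₈ w, path₉ w, path₁₀ w} : Set C(Set.Icc (0 : ℝ) 1, ℝ)) := by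
  set F : ℝ → ℝ := Set.IccExtend zero_le_one f with hFdef
  have hF : Continuous F := f.continuous.Icc_extend'
  have hFf : ∀ x : Set.Icc (0 : ℝ) 1, f x = F x := fun x => by
    rw [hFdef, Set.IccExtend_val]
  have hF1 : F 1 = w := by rw [← h1, hFf]
  have hselF : ∀ x ∈ Set.Icc (0 : ℝ) 1, ∃ i, F x = w + lineC i + lineM i * x := by
    intro x hx
    have := hsel ⟨x, hx⟩
    rwa [hFf] at this
  have key : ∀ a b : ℝ, a < b → 0 ≤ a → b ≤ 1 → (∀ x ∈ Set.Ioo a b, x ≠ 1 / 3 ∧ x ≠ 1 / 2 ∧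
      x ≠ 2 / 3) → ∃ i, ∀ x ∈ Set.Icc a b, F x = w + lineC i + lineM i * x := by
    intro a b hab ha hb hne
    refine single_line F hF w a b hab (fun x hx => hselF x ⟨by linarith [hx.1], by linarith [hx.2]⟩)
      (fun i j x hx h => ?_)
    obtain ⟨n1, n2, n3⟩ := hne x hx
    exact noncross i j x (by linarith [hx.1]) (by linarith [hx.2]) n1 n2 n3 h
  obtain ⟨i₁, e₁⟩ := key 0 (1 / 3) (by norm_num) (by norm_num) (by norm_num) (by
    rintro x ⟨l, r⟩
    refine ⟨?_, ?_, ?_⟩ <;> intro h <;> linarith)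
  obtain ⟨i₂, e₂⟩ := key (1 / 3) (1 / 2) (by norm_num) (by norm_num) (by norm_num) (by
    rintro x ⟨l, r⟩
    refine ⟨?_, ?_, ?_⟩ <;> intro h <;> linarith)
  obtain ⟨i₃, e₃⟩ := key (1 / 2) (2 / 3) (by norm_num) (by norm_num) (by norm_num) (by
    rintro x ⟨l, r⟩
    refine ⟨?_, ?_, ?_⟩ <;> intro h <;> linarith)
  obtain ⟨i₄, e₄⟩ := key (2 / 3) 1 (by norm_num) (by norm_num) (by norm_num) (by
    rintro x ⟨l, r⟩
    refine ⟨?_, ?_, ?_⟩ <;> intro h <;> linarith)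
  have c4 : lineC i₄ + lineM i₄ = 0 := by
    have := e₄ 1 ⟨by norm_num, by norm_num⟩
    linarith
  have c3 : lineC i₃ + lineM i₃ * (2 / 3) = lineC i₄ + lineM i₄ * (2 / 3) := by
    have := e₄ (2 / 3) ⟨by norm_num, by norm_num⟩
    have := e₃ (2 / 3) ⟨by norm_num, by norm_num⟩
    linarith
  have c2 : lineC i₂ + lineM i₂ * (1 / 2) = lineC i₃ + lineM i₃ * (1 / 2) := by
    have := e₃ (1 / 2) ⟨by norm_num, by norm_num⟩
    have := e₂ (1 / 2) ⟨by norm_num, by norm_num⟩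
    linarith
  have c1 : lineC i₁ + lineM i₁ * (1 / 3) = lineC i₂ + lineM i₂ * (1 / 3) := by
    have := e₂ (1 / 3) ⟨by norm_num, by norm_num⟩
    have := e₁ (1 / 3) ⟨by norm_num, by norm_num⟩
    linarith
  have fin : ∀ p : C(Set.Icc (0 : ℝ) 1, ℝ),
      (∀ x : Set.Icc (0 : ℝ) 1, (x : ℝ) ≤ 1 / 3 → w + lineC i₁ + lineM i₁ * x = p x) →
      (∀ x : Set.Icc (0 : ℝ) 1, 1 / 3 ≤ (x : ℝ) → (x : ℝ) ≤ 1 / 2 →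
        w + lineC i₂ + lineM i₂ * x = p x) →
      (∀ x : Set.Icc (0 : ℝ) 1, 1 / 2 ≤ (x : ℝ) → (x : ℝ) ≤ 2 / 3 →
        w + lineC i₃ + lineM i₃ * x = p x) →
      (∀ x : Set.Icc (0 : ℝ) 1, 2 / 3 ≤ (x : ℝ) → w + lineC i₄ + lineM i₄ * x = p x) →
      f = p := by
    intro p q1 q2 q3 q4
    ext x
    rw [hFf]
    rcases le_total (x : ℝ) (1 / 3) with h | h
    · rw [← q1 x h]
      exact e₁ x ⟨x.2.1, h⟩
    rcases le_total (x : ℝ) (1 / 2) with hbb | hbb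
    · rw [← q2 x h hbb]
      exact e₂ x ⟨h, hbb⟩
    rcases le_total (x : ℝ) (2 / 3) with hcc | hcc
    · rw [← q3 x hbb hcc]
      exact e₃ x ⟨hbb, hcc⟩
    · rw [← q4 x hcc]
      exact e₄ x ⟨hcc, x.2.2⟩
  clear e₁ e₂ e₃ e₄ key hselF hF1 hFf hF hsel h1
  clear hFdef F
  simp only [Set.mem_insert_iff, Set.mem_singleton_iff]
  have d4 : i₄ = 0 ∨ i₄ = 1 ∨ i₄ = 2 ∨ i₄ = 6 := by
    clear c1 c2 c3 fin
    fin_cases i₄ <;> simp [lineC, lineM] at c4 ⊢ <;> norm_num at c4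
  have d3 : i₃ = i₄ ∨ (i₃ = 7 ∧ i₄ = 1) := by
    clear c1 c2 c4 fin
    rcases d4 with rfl | rfl | rfl | rfl <;> fin_cases i₃ <;> simp [lineC, lineM] at c3 ⊢ <;>
      norm_num at c3
  have d2 : i₂ = i₃ ∨ (i₂ = 5 ∧ i₃ = 0) ∨ (i₂ = 3 ∧ i₃ = 1) ∨ (i₂ = 2 ∧ i₃ = 7) ∨
      (i₂ = 7 ∧ i₃ = 2) := by
    have dd3 : i₃ = 0 ∨ i₃ = 1 ∨ i₃ = 2 ∨ i₃ = 6 ∨ i₃ = 7 := by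
      rcases d3 with h | h
      · rw [h]; tauto
      · tauto
    clear c1 c3 c4 fin d3 d4
    rcases dd3 with rfl | rfl | rfl | rfl | rfl <;> fin_cases i₂ <;>
      simp [lineC, lineM] at c2 ⊢ <;> norm_num at c2
  have d1 : i₁ = i₂ ∨ (i₁ = 4 ∧ i₂ = 1) ∨ (i₁ = 1 ∧ i₂ = 4) := by
    clear c2 c3 c4 fin d3 d4 d2
    fin_cases i₁ <;> fin_cases i₂ <;>
      simp [lineC, lineM] at c1 ⊢ <;> norm_num at c1
  clear c1 c2 c3 c4
  rcases d4 with rfl | rfl | rfl | rfl <;>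
  rcases d3 with rfl | ⟨rfl, h⟩ <;> (try simp at h) <;>
  rcases d2 with rfl | ⟨rfl, h⟩ | ⟨rfl, h⟩ | ⟨rfl, h⟩ | ⟨rfl, h⟩ <;> (try simp at h) <;>
  rcases d1 with rfl | ⟨rfl, h⟩ | ⟨rfl, h⟩ <;> (try simp at h)
  · refine Or.inl (fin (path₁ w) ?_ ?_ ?_ ?_)
    all_goals
      rintro ⟨x, hx0, hx1⟩
      simp [lineC, lineM, path₁]
      try grind
  · refine Or.inr (Or.inr (Or.inr (Or.inr (Or.inr (Or.inr (Or.inr (Or.inr (Or.inl (fin (path₉ w) ?_ ?_ ?_ ?_)))))))))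
    all_goals
      rintro ⟨x, hx0, hx1⟩
      simp [lineC, lineM, path₉]
      try grind
  · refine Or.inr (Or.inl (fin (path₂ w) ?_ ?_ ?_ ?_))
    all_goals
      rintro ⟨x, hx0, hx1⟩
      simp [lineC, lineM, path₂]
      try grind
  · refine Or.inr (Or.inr (Or.inr (Or.inr (Or.inl (fin (path₅ w) ?_ ?_ ?_ ?_)))))
    all_goals
      rintro ⟨x, hx0, hx1⟩
      simp [lineC, lineM, path₅]
      try grind
  · refine Or.inr (Or.inr (Or.inr (Or.inr (Or.inr (Or.inl (fin (path₆ w) ?_ ?_ ?_ ?_))))))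
    all_goals
      rintro ⟨x, hx0, hx1⟩
      simp [lineC, lineM, path₆]
      try grind
  · refine Or.inr (Or.inr (Or.inr (Or.inr (Or.inr (Or.inr (Or.inl (fin (path₇ w) ?_ ?_ ?_ ?_)))))))
    all_goals
      rintro ⟨x, hx0, hx1⟩
      simp [lineC, lineM, path₇]
      try grind
  · refine Or.inr (Or.inr (Or.inr (Or.inr (Or.inr (Or.inr (Or.inr (Or.inr (Or.inr ((fin (path₁₀ w) ?_ ?_ ?_ ?_))))))))))
    all_goals
      rintro ⟨x, hx0, hx1⟩
      simp [lineC, lineM, path₁₀]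
      try grind
  · refine Or.inr (Or.inr (Or.inl (fin (path₃ w) ?_ ?_ ?_ ?_)))
    all_goals
      rintro ⟨x, hx0, hx1⟩
      simp [lineC, lineM, path₃]
      try grind
  · refine Or.inr (Or.inr (Or.inr (Or.inr (Or.inr (Or.inr (Or.inr (Or.inl (fin (path₈ w) ?_ ?_ ?_ ?_))))))))
    all_goals
      rintro ⟨x, hx0, hx1⟩
      simp [lineC, lineM, path₈]
      try grind
  · refine Or.inr (Or.inr (Or.inr (Or.inl (fin (path₄ w) ?_ ?_ ?_ ?_))))
    all_goals
      rintro ⟨x, hx0, hx1⟩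
      simp [lineC, lineM, path₄]
      try grind

/-- The ten paths as a family. -/
noncomputable def pathFam (w : ℤ) : Fin 10 → C(Set.Icc (0 : ℝ) 1, ℝ) :=
  ![path₁ w, path₂ w, path₃ w, path₄ w, path₅ w, path₆ w, path₇ w, path₈ w, path₉ w, path₁₀ w]

/-- A numerical code distinguishing the ten paths. -/
def pathCode : Fin 10 → ℤ := ![1241, -2482, -1241, 0, -1282, -1262, -22, -21, 21, -1242]

lemma ncard_ten (w : ℤ) : ({path₁ w, path₂ w, path₃ w, path₄ w, path₅ w,
        path₆ w, path₇ w, path₈ w, path₉ w, path₁₀ w} :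
      Set C(Set.Icc (0 : ℝ) 1, ℝ)).ncard = 10 := by
  have hr : ({path₁ w, path₂ w, path₃ w, path₄ w, path₅ w,
        path₆ w, path₇ w, path₈ w, path₉ w, path₁₀ w} :
      Set C(Set.Icc (0 : ℝ) 1, ℝ)) = Set.range (pathFam w) := by
    simp only [pathFam, Matrix.range_cons, Matrix.range_empty, Set.singleton_union,
      Set.union_empty]
  have hcode : ∀ i, (pathCode i : ℝ) = 3 / 2 * (400 * pathFam w i ⟨0, by norm_num, by norm_num⟩
      + 20 * pathFam w i ⟨1 / 3, by norm_num, by norm_num⟩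
      + pathFam w i ⟨2 / 3, by norm_num, by norm_num⟩ - 421 * w) := by
    intro i
    fin_cases i <;> simp [pathCode, pathFam, path₁, path₂, path₃, path₄, path₅, path₆, path₇, path₈, path₉, path₁₀] <;> grind
  have hinj : Function.Injective (pathFam w) := by
    intro i j hij
    have h : (pathCode i : ℝ) = pathCode j := by rw [hcode, hcode, hij]
    have hbb : pathCode i = pathCode j := by exact_mod_cast h
    revert hbb
    clear h hij hcode hr
    revert i j
    decide
  rw [hr, ← Set.image_univ, Set.ncard_image_of_injective _ hinj, Set.ncard_univ]
  simp

/-- There are exactly ten continuous functions on `[0,1]` that are piecewise along the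
eight lines `w + 2 - 2t`, `w - 4 + 4t`, `w - 2 + 2t`, `w - 2`, `w - 2 - 2t`, `w + 2t`,
`w`, `w - 2t`, take the value `w` at `t = 1`, and stay in the triangular region
`w + 4(t-1) ≤ f(t) ≤ w - 2(t-1)`.  This is the enumeration of the ten possible paths
for the annular Rasmussen invariant `d_t` of a 4-braid closure of writhe `w`, before
the subcomplex restriction is applied. -/
theorem ten_paths_for_four_braids (w : ℤ) :
    {f : C(Set.Icc (0 : ℝ) 1, ℝ) |
        PiecewiseAlong ({fun t : ℝ => (w : ℝ) + 2 - 2 * t, fun t : ℝ => (w : ℝ) - 4 + 4 * t,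
            fun t : ℝ => (w : ℝ) - 2 + 2 * t, fun _ : ℝ => (w : ℝ) - 2,
            fun t : ℝ => (w : ℝ) - 2 - 2 * t, fun t : ℝ => (w : ℝ) + 2 * t,
            fun _ : ℝ => (w : ℝ), fun t : ℝ => (w : ℝ) - 2 * t} : Set (ℝ → ℝ)) f ∧
        f ⟨1, Set.right_mem_Icc.mpr zero_le_one⟩ = (w : ℝ) ∧
        ∀ x : Set.Icc (0 : ℝ) 1,
          (w : ℝ) + 4 * ((x : ℝ) - 1) ≤ f x ∧ f x ≤ (w : ℝ) - 2 * ((x : ℝ) - 1)}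
      = {path₁ w, path₂ w, path₃ w, path₄ w, path₅ w,
          path₆ w, path₇ w, path₈ w, path₉ w, path₁₀ w} ∧
    ({path₁ w, path₂ w, path₃ w, path₄ w, path₅ w,
        path₆ w, path₇ w, path₈ w, path₉ w, path₁₀ w} :
      Set C(Set.Icc (0 : ℝ) 1, ℝ)).ncard = 10 := by
  have hS : ∀ g : ℝ → ℝ, g ∈ ({fun t : ℝ => (w : ℝ) + 2 - 2 * t, fun t : ℝ => (w : ℝ) - 4 + 4 * t,
            fun t : ℝ => (w : ℝ) - 2 + 2 * t, fun _ : ℝ => (w : ℝ) - 2,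
            fun t : ℝ => (w : ℝ) - 2 - 2 * t, fun t : ℝ => (w : ℝ) + 2 * t,
            fun _ : ℝ => (w : ℝ), fun t : ℝ => (w : ℝ) - 2 * t} : Set (ℝ → ℝ)) →
      ∃ i, ∀ x, g x = w + lineC i + lineM i * x := by
    intro g hg
    simp only [Set.mem_insert_iff, Set.mem_singleton_iff] at hg
    rcases hg with rfl | rfl | rfl | rfl | rfl | rfl | rfl | rfl
    · exact ⟨0, fun x => by simp [lineC, lineM]; ring⟩
    · exact ⟨1, fun x => by simp [lineC, lineM]; ring⟩
    · exact ⟨2, fun x => by simp [lineC, lineM]; ring⟩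
    · exact ⟨3, fun x => by simp [lineC, lineM]; ring⟩
    · exact ⟨4, fun x => by simp [lineC, lineM]; ring⟩
    · exact ⟨5, fun x => by simp [lineC, lineM]⟩
    · exact ⟨6, fun x => by simp [lineC, lineM]⟩
    · exact ⟨7, fun x => by simp [lineC, lineM]; ring⟩
  refine ⟨Set.Subset.antisymm ?_ ?_, ncard_ten w⟩
  · rintro f ⟨⟨k, t, t0, tk, -, hp⟩, h1, -⟩
    refine forward w f (fun x => ?_) h1
    have hk : 0 < k := by
      rcases Nat.eq_zero_or_pos k with rfl | h
      · rw [t0] at tk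
        norm_num at tk
      · exact h
    obtain ⟨i, hi, hl, hr⟩ := exists_piece k t t0 x x.2.1 hk (x.2.2.trans tk.ge)
    obtain ⟨g, hg, hfg⟩ := hp i hi
    obtain ⟨j, hj⟩ := hS g hg
    exact ⟨j, by rw [hfg x hl hr, hj]⟩
  · intro f hf
    simp only [Set.mem_insert_iff, Set.mem_singleton_iff] at hf
    rcases hf with rfl | rfl | rfl | rfl | rfl | rfl | rfl | rfl | rfl | rfl
    · refine ⟨piecewise_of_four _ _
        (fun t : ℝ => (w : ℝ) + 2 - 2 * t) (fun t : ℝ => (w : ℝ) + 2 - 2 * t)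
        (fun t : ℝ => (w : ℝ) + 2 - 2 * t) (fun t : ℝ => (w : ℝ) + 2 - 2 * t)
        (by simp) (by simp) (by simp) (by simp) ?_ ?_ ?_ ?_, ?_, ?_⟩
      all_goals first
        | rintro ⟨x, hx0, hx1⟩ hl hr
          simp only [path₁, ContinuousMap.coe_mk] at *
          grind
        | rintro ⟨x, hx0, hx1⟩
          simp only [path₁, ContinuousMap.coe_mk]
          grind
        | simp only [path₁, ContinuousMap.coe_mk]
          try grind
    · refine ⟨piecewise_of_four _ _
        (fun t : ℝ => (w : ℝ) - 4 + 4 * t) (fun t : ℝ => (w : ℝ) - 4 + 4 * t)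
        (fun t : ℝ => (w : ℝ) - 4 + 4 * t) (fun t : ℝ => (w : ℝ) - 4 + 4 * t)
        (by simp) (by simp) (by simp) (by simp) ?_ ?_ ?_ ?_, ?_, ?_⟩
      all_goals first
        | rintro ⟨x, hx0, hx1⟩ hl hr
          simp only [path₂, ContinuousMap.coe_mk] at *
          grind
        | rintro ⟨x, hx0, hx1⟩
          simp only [path₂, ContinuousMap.coe_mk]
          grind
        | simp only [path₂, ContinuousMap.coe_mk]
          try grind
    · refine ⟨piecewise_of_four _ _
        (fun t : ℝ => (w : ℝ) - 2 + 2 * t) (fun t : ℝ => (w : ℝ) - 2 + 2 * t)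
        (fun t : ℝ => (w : ℝ) - 2 + 2 * t) (fun t : ℝ => (w : ℝ) - 2 + 2 * t)
        (by simp) (by simp) (by simp) (by simp) ?_ ?_ ?_ ?_, ?_, ?_⟩
      all_goals first
        | rintro ⟨x, hx0, hx1⟩ hl hr
          simp only [path₃, ContinuousMap.coe_mk] at *
          grind
        | rintro ⟨x, hx0, hx1⟩
          simp only [path₃, ContinuousMap.coe_mk]
          grind
        | simp only [path₃, ContinuousMap.coe_mk]
          try grind
    · refine ⟨piecewise_of_four _ _
        (fun _ : ℝ => (w : ℝ)) (fun _ : ℝ => (w : ℝ))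
        (fun _ : ℝ => (w : ℝ)) (fun _ : ℝ => (w : ℝ))
        (by simp) (by simp) (by simp) (by simp) ?_ ?_ ?_ ?_, ?_, ?_⟩
      all_goals first
        | rintro ⟨x, hx0, hx1⟩ hl hr
          simp only [path₄, ContinuousMap.coe_mk] at *
          grind
        | rintro ⟨x, hx0, hx1⟩
          simp only [path₄, ContinuousMap.coe_mk]
          grind
        | simp only [path₄, ContinuousMap.coe_mk]
          try grind
    · refine ⟨piecewise_of_four _ _
        (fun t : ℝ => (w : ℝ) - 2 - 2 * t) (fun t : ℝ => (w : ℝ) - 4 + 4 * t)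
        (fun t : ℝ => (w : ℝ) - 4 + 4 * t) (fun t : ℝ => (w : ℝ) - 4 + 4 * t)
        (by simp) (by simp) (by simp) (by simp) ?_ ?_ ?_ ?_, ?_, ?_⟩
      all_goals first
        | rintro ⟨x, hx0, hx1⟩ hl hr
          simp only [path₅, ContinuousMap.coe_mk] at *
          grind
        | rintro ⟨x, hx0, hx1⟩
          simp only [path₅, ContinuousMap.coe_mk]
          grind
        | simp only [path₅, ContinuousMap.coe_mk]
          try grind
    · refine ⟨piecewise_of_four _ _
        (fun _ : ℝ => (w : ℝ) - 2) (fun _ : ℝ => (w : ℝ) - 2)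
        (fun t : ℝ => (w : ℝ) - 4 + 4 * t) (fun t : ℝ => (w : ℝ) - 4 + 4 * t)
        (by simp) (by simp) (by simp) (by simp) ?_ ?_ ?_ ?_, ?_, ?_⟩
      all_goals first
        | rintro ⟨x, hx0, hx1⟩ hl hr
          simp only [path₆, ContinuousMap.coe_mk] at *
          grind
        | rintro ⟨x, hx0, hx1⟩
          simp only [path₆, ContinuousMap.coe_mk]
          grind
        | simp only [path₆, ContinuousMap.coe_mk]
          try grind
    · refine ⟨piecewise_of_four _ _
        (fun t : ℝ => (w : ℝ) - 2 * t) (fun t : ℝ => (w : ℝ) - 2 * t)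
        (fun t : ℝ => (w : ℝ) - 2 * t) (fun t : ℝ => (w : ℝ) - 4 + 4 * t)
        (by simp) (by simp) (by simp) (by simp) ?_ ?_ ?_ ?_, ?_, ?_⟩
      all_goals first
        | rintro ⟨x, hx0, hx1⟩ hl hr
          simp only [path₇, ContinuousMap.coe_mk] at *
          grind
        | rintro ⟨x, hx0, hx1⟩
          simp only [path₇, ContinuousMap.coe_mk]
          grind
        | simp only [path₇, ContinuousMap.coe_mk]
          try grind
    · refine ⟨piecewise_of_four _ _
        (fun t : ℝ => (w : ℝ) - 2 * t) (fun t : ℝ => (w : ℝ) - 2 * t)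
        (fun t : ℝ => (w : ℝ) - 2 + 2 * t) (fun t : ℝ => (w : ℝ) - 2 + 2 * t)
        (by simp) (by simp) (by simp) (by simp) ?_ ?_ ?_ ?_, ?_, ?_⟩
      all_goals first
        | rintro ⟨x, hx0, hx1⟩ hl hr
          simp only [path₈, ContinuousMap.coe_mk] at *
          grind
        | rintro ⟨x, hx0, hx1⟩
          simp only [path₈, ContinuousMap.coe_mk]
          grind
        | simp only [path₈, ContinuousMap.coe_mk]
          try grind
    · refine ⟨piecewise_of_four _ _
        (fun t : ℝ => (w : ℝ) + 2 * t) (fun t : ℝ => (w : ℝ) + 2 * t)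
        (fun t : ℝ => (w : ℝ) + 2 - 2 * t) (fun t : ℝ => (w : ℝ) + 2 - 2 * t)
        (by simp) (by simp) (by simp) (by simp) ?_ ?_ ?_ ?_, ?_, ?_⟩
      all_goals first
        | rintro ⟨x, hx0, hx1⟩ hl hr
          simp only [path₉, ContinuousMap.coe_mk] at *
          grind
        | rintro ⟨x, hx0, hx1⟩
          simp only [path₉, ContinuousMap.coe_mk]
          grind
        | simp only [path₉, ContinuousMap.coe_mk]
          try grind
    · refine ⟨piecewise_of_four _ _
        (fun t : ℝ => (w : ℝ) - 2 + 2 * t) (fun t : ℝ => (w : ℝ) - 2 + 2 * t)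
        (fun t : ℝ => (w : ℝ) - 2 * t) (fun t : ℝ => (w : ℝ) - 4 + 4 * t)
        (by simp) (by simp) (by simp) (by simp) ?_ ?_ ?_ ?_, ?_, ?_⟩
      all_goals first
        | rintro ⟨x, hx0, hx1⟩ hl hr
          simp only [path₁₀, ContinuousMap.coe_mk] at *
          grind
        | rintro ⟨x, hx0, hx1⟩
          simp only [path₁₀, ContinuousMap.coe_mk]
          grind
        | simp only [path₁₀, ContinuousMap.coe_mk]
          try grind
end
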